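/- arXiv:2406.15742 — 3 statements merged into one kernel-verified Lean document; each statement's English description precedes it below -/
import Mathlib

section
/- Sampling a single primitive random variable yields a well-behaved trace measure: let μ be a finite measure on V with μ ≪ ν and density f (so μ = ν.withDensity f), and let k : String. Let ι_k : V → 𝕋 be the map sending v to the trace of shape {k} whose value at k is v. Then the pushforward measure (ι_k)_* μ on 𝕋 satisfies: (1) (ι_k)_* μ ≪ B_𝕋, with density u ↦ f(u k) if the shape of u is {k} and 0 otherwise; and (2) (ι_k)_* μ is discrete-structured. -/
open MeasureTheory
open scoped ENNReal NNReal

/-- The value space: reals together with Booleans. -/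
abbrev V : Type := ℝ ⊕ Bool

/-- The base measure on values: Lebesgue measure on the real component plus
counting measure on the Boolean component. -/
noncomputable def ν : Measure V :=
  Measure.map Sum.inl (volume : Measure ℝ) + Measure.map Sum.inr (Measure.count : Measure Bool)

/-- The space of traces: finite dictionaries from names (strings) to values. -/
abbrev 𝕋 : Type := Σ s : Finset String, (↑s → V)

/-- The base measure on traces. -/
noncomputable def B𝕋 : Measure 𝕋 :=
  Measure.sum fun s : Finset String =>
    Measure.map (fun f => (⟨s, f⟩ : 𝕋)) (Measure.pi fun _ : ↑s => ν)

/-- A measure on traces is discrete-structured if almost every pair of traces is either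
equal, or disagrees at some name present in the shape of both. -/
def DiscreteStructured (μ : Measure 𝕋) : Prop :=
  ∀ᵐ p ∂(μ.prod μ),
    p.1 = p.2 ∨ ∃ (k : String) (h₁ : k ∈ p.1.1) (h₂ : k ∈ p.2.1),
      p.1.2 ⟨k, h₁⟩ ≠ p.2.2 ⟨k, h₂⟩

/-- The singleton trace `{k ↦ v}`. -/
def ι (k : String) (v : V) : 𝕋 := ⟨{k}, fun _ => v⟩

theorem measurable_sigma_aux {g : 𝕋 → ℝ≥0∞} (h : ∀ s : Finset String, Measurable fun x : (↑s → V) => g ⟨s, x⟩) :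
    Measurable g := by
  intro t ht
  refine MeasurableSpace.measurableSet_iInf.2 fun s => ?_
  exact h s ht

theorem measurable_mk_aux (s : Finset String) : Measurable (fun f : (↑s → V) => (⟨s, f⟩ : 𝕋)) := by
  intro t ht
  exact MeasurableSpace.measurableSet_iInf.1 ht s

theorem measurable_ι (k : String) : Measurable (ι k) :=
  (measurable_mk_aux {k}).comp (measurable_pi_lambda _ fun _ => measurable_id)

theorem map_pi_aux (k : String) :
    Measure.map (fun (v : V) (_ : ↑({k} : Finset String)) => v) ν =
      Measure.pi fun _ : ↑({k} : Finset String) => ν :=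
  ((measurePreserving_piUnique fun _ : ↑({k} : Finset String) => ν).symm _).map_eq

/-- Sampling a single primitive random variable at name `k` from a primitive
distribution `μ = ν.withDensity f` yields a trace measure that is absolutely
continuous w.r.t. `B𝕋` — with density `u ↦ f (u k)` on traces of shape `{k}`
and `0` elsewhere — and is discrete-structured. -/
theorem sample_trace_measure_wellBehaved
    (μ : Measure V) [IsFiniteMeasure μ] (f : V → ℝ≥0∞) (hf : Measurable f)
    (hμ : μ = ν.withDensity f) (k : String) :
    Measure.map (ι k) μ ≪ B𝕋 ∧
    Measure.map (ι k) μ =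
      B𝕋.withDensity (fun u =>
        if h : u.1 = ({k} : Finset String) then
          f (u.2 ⟨k, by simp [h]⟩)
        else 0) ∧
    DiscreteStructured (Measure.map (ι k) μ) := by
  have hD : Measure.map (ι k) μ =
      B𝕋.withDensity (fun u =>
        if h : u.1 = ({k} : Finset String) then
          f (u.2 ⟨k, by simp [h]⟩)
        else 0) := by
    set g : 𝕋 → ℝ≥0∞ := fun u =>
        if h : u.1 = ({k} : Finset String) then
          f (u.2 ⟨k, by simp [h]⟩)
        else 0 with hg
    have hgm : Measurable g := by
      refine measurable_sigma_aux fun s => ?_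
      by_cases h : s = {k}
      · subst h
        simp only [hg, dite_true]
        exact hf.comp (measurable_pi_apply (X := fun _ : ↑({k} : Finset String) => V) ⟨k, by simp⟩)
      · simp only [hg, h, dite_false]
        exact measurable_const
    ext S hS
    rw [Measure.map_apply (measurable_ι k) hS, hμ,
      withDensity_apply _ (measurable_ι k hS), withDensity_apply _ hS, B𝕋,
      Measure.restrict_sum _ hS, lintegral_sum_measure, tsum_eq_single {k}]
    · rw [← map_pi_aux, Measure.map_map (measurable_mk_aux _)
        (measurable_pi_lambda (fun (v : V) (_ : ↑({k} : Finset String)) => v)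
          fun _ => measurable_id)]
      change _ = ∫⁻ a in S, g a ∂(Measure.map (ι k) ν)
      rw [setLIntegral_map hS hgm (measurable_ι k)]
      simp [hg, ι]
    · intro s hs
      rw [setLIntegral_map hS hgm (measurable_mk_aux s)]
      simp [hg, hs]
  refine ⟨hD ▸ withDensity_absolutelyContinuous _ _, hD, ?_⟩
  have hm : MeasurableSet {u : 𝕋 | u.1 = {k}} := by
    refine MeasurableSpace.measurableSet_iInf.2 fun s => ?_
    rw [MeasurableSpace.map_def]
    change MeasurableSet {_x : (↑s → V) | s = {k}}
    exact MeasurableSet.const (s = {k})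
  have hs : ∀ᵐ u ∂(Measure.map (ι k) μ), u.1 = {k} := by
    rw [ae_map_iff (measurable_ι k).aemeasurable hm]
    exact Filter.Eventually.of_forall fun v => rfl
  unfold DiscreteStructured
  filter_upwards [Measure.quasiMeasurePreserving_fst.ae hs,
    Measure.quasiMeasurePreserving_snd.ae hs] with p h1 h2
  obtain ⟨⟨s, a⟩, ⟨t, b⟩⟩ := p
  simp only at h1 h2
  subst h1 h2
  by_cases hab : a ⟨k, by simp⟩ = b ⟨k, by simp⟩
  · left
    have : a = b := by
      funext ⟨x, hx⟩
      obtain rfl := Finset.mem_singleton.1 hx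
      exact hab
    rw [this]
  · right
    exact ⟨k, by simp, by simp, hab⟩
end

section
/- Sequencing preserves absolute continuity of trace measures, with an explicit density for the composite: let μ be a finite measure on 𝕋 with μ ≪ B_𝕋 and density f, and let κ be a Markov kernel from 𝕋 to 𝕋 such that there is a jointly measurable g : 𝕋 × 𝕋 → [0,∞] with κ(u) = B_𝕋.withDensity (g u) for every u. Define the measure β on 𝕋 by β(A) := ∫_𝕋 ∫_𝕋 1[u₁ and u₂ are disjoint] · 1_A(u₁ ++ u₂) dκ(u₁)(u₂) dμ(u₁). Then β ≪ B_𝕋, and a density of β with respect to B_𝕋 is given at a trace u of shape s by the finite sum h(u) := Σ_{A ⊆ s} f(u↾A) · g(u↾A, u↾(s \ A)), where u↾A denotes the trace of shape A obtained by restricting u to the names in A. -/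
open MeasureTheory
open scoped ENNReal NNReal

/-- Concatenation of traces (for traces with disjoint shapes, the result agrees with
the first on its shape and with the second on its shape; on overlapping names the
first trace takes precedence). -/
def tcat (u₁ u₂ : 𝕋) : 𝕋 :=
  ⟨u₁.1 ∪ u₂.1, fun k =>
    if h : k.1 ∈ u₁.1 then u₁.2 ⟨k.1, h⟩
    else u₂.2 ⟨k.1, (Finset.mem_union.mp k.2).resolve_left h⟩⟩

/-- Restriction of a trace `u` to a subset `A` of its shape. -/
def tres (u : 𝕋) (A : Finset String) (hA : A ⊆ u.1) : 𝕋 :=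
  ⟨A, fun k => u.2 ⟨k.1, hA k.2⟩⟩

theorem countable_string_aux : Countable String := by
  have h1 : Countable Char := by
    have : Function.Injective Char.toNat := fun a b h => Char.toNat_inj.mp h
    exact this.countable
  have h2 : Function.Injective String.toList := fun a b h => String.toList_inj.mp h
  exact h2.countable

theorem sigmaFinite_nu : SigmaFinite ν := by
  unfold ν
  have h1 : SigmaFinite (Measure.map (Sum.inl : ℝ → V) (volume : Measure ℝ)) :=
    MeasurableEmbedding.sigmaFinite_map
      ⟨Sum.inl_injective, measurable_inl, fun _ hs => MeasurableSet.inl_image hs⟩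
  have h2 : SigmaFinite (Measure.map (Sum.inr : Bool → V) (Measure.count : Measure Bool)) :=
    MeasurableEmbedding.sigmaFinite_map
      ⟨Sum.inr_injective, measurable_inr, fun _ hs => MeasurableSet.inr_image hs⟩
  infer_instance

theorem measurable_tmk (s : Finset String) : Measurable (fun x : (↑s → V) => (⟨s, x⟩ : 𝕋)) := by
  intro A hA
  exact (MeasurableSpace.measurableSet_iInf.mp hA) s

theorem measurable_of_comp (F : 𝕋 → ℝ≥0∞)
    (h : ∀ s : Finset String, Measurable (fun x : (↑s → V) => F ⟨s, x⟩)) : Measurable F := by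
  intro A hA
  exact MeasurableSpace.measurableSet_iInf.mpr fun s => h s hA

theorem lintegral_B (F : 𝕋 → ℝ≥0∞) (h : Measurable F) :
    ∫⁻ u, F u ∂B𝕋 = ∑' s : Finset String, ∫⁻ x : (↑s → V), F ⟨s, x⟩ ∂(Measure.pi fun _ => ν) := by
  unfold B𝕋
  rw [lintegral_sum_measure]
  congr 1
  funext s
  exact lintegral_map h (measurable_tmk s)

theorem measurable_tres (s A : Finset String) (hA : A ⊆ s) :
    Measurable (fun x : (↑s → V) => tres ⟨s, x⟩ A hA) := by
  unfold tres
  refine (measurable_tmk A).comp (measurable_pi_lambda _ fun k => ?_)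
  exact measurable_pi_apply (X := fun _ : ↑s => V) ⟨k.1, hA k.2⟩

theorem measurable_tcat (s t : Finset String) :
    Measurable (fun p : (↑s → V) × (↑t → V) => tcat ⟨s, p.1⟩ ⟨t, p.2⟩) := by
  unfold tcat
  refine (measurable_tmk (s ∪ t)).comp (measurable_pi_lambda _ fun k => ?_)
  by_cases h : k.1 ∈ s
  · simp only [h, dite_true]
    exact (measurable_pi_apply (X := fun _ : ↑s => V) ⟨k.1, h⟩).comp measurable_fst
  · simp only [h, dite_false]
    exact (measurable_pi_apply (X := fun _ : ↑t => V)
      ⟨k.1, (Finset.mem_union.mp k.2).resolve_left h⟩).comp measurable_snd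

theorem tres_eq (u v : 𝕋) (B : Finset String) (hB : B ⊆ u.1) (h : B = v.1)
    (hk : ∀ k (h1 : k ∈ u.1) (h2 : k ∈ v.1), u.2 ⟨k, h1⟩ = v.2 ⟨k, h2⟩) :
    tres u B hB = v := by
  obtain ⟨t, y⟩ := v
  subst h
  unfold tres
  congr 1
  funext k
  exact hk _ _ _

theorem tcat_eq (s t : Finset String) (h : Disjoint s t) (p : (↑s → V) × (↑t → V)) :
    (⟨s ∪ t, MeasurableEquiv.piFinsetUnion (fun _ : String => V) h p⟩ : 𝕋)
      = tcat ⟨s, p.1⟩ ⟨t, p.2⟩ := by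
  unfold tcat
  congr 1
  funext k
  obtain ⟨k, hk⟩ := k
  by_cases hs : k ∈ s
  · simp only [hs, dite_true]
    exact Equiv.piFinsetUnion_left (fun _ : String => V) h hs hk
  · simp only [hs, dite_false]
    exact Equiv.piFinsetUnion_right (fun _ : String => V) h
      ((Finset.mem_union.mp hk).resolve_left hs) hk

theorem tres_tcat_left (u v : 𝕋) (hA : u.1 ⊆ (tcat u v).1) :
    tres (tcat u v) u.1 hA = u := by
  refine tres_eq _ _ _ _ rfl fun k h1 h2 => ?_
  simp [tcat, h2]

theorem tres_tcat_right (u v : 𝕋) (h : Disjoint u.1 v.1) (hA : (tcat u v).1 \ u.1 ⊆ (tcat u v).1) :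
    tres (tcat u v) ((tcat u v).1 \ u.1) hA = v := by
  refine tres_eq _ _ _ _ ?_ fun k h1 h2 => ?_
  · exact Finset.union_sdiff_cancel_left h
  · have : k ∉ u.1 := Finset.disjoint_right.mp h h2
    simp [tcat, this]

/-- one summand of the density, times a test function -/
noncomputable def summand (f : 𝕋 → ℝ≥0∞) (g : 𝕋 × 𝕋 → ℝ≥0∞) (P : 𝕋 → ℝ≥0∞)
    (u : 𝕋) (A : Finset String) (hA : A ⊆ u.1) : ℝ≥0∞ :=
  P u * (f (tres u A hA) * g (tres u A hA, tres u (u.1 \ A) Finset.sdiff_subset))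

theorem measurable_summand (f : 𝕋 → ℝ≥0∞) (hf : Measurable f) (g : 𝕋 × 𝕋 → ℝ≥0∞)
    (hg : Measurable g) (P : 𝕋 → ℝ≥0∞) (hP : Measurable P) (s A : Finset String) (hA : A ⊆ s) :
    Measurable (fun x : (↑s → V) => summand f g P ⟨s, x⟩ A hA) := by
  unfold summand
  exact (hP.comp (measurable_tmk s)).mul ((hf.comp (measurable_tres s A hA)).mul
    (hg.comp ((measurable_tres s A hA).prodMk (measurable_tres s (s \ A) Finset.sdiff_subset))))

theorem key (f : 𝕋 → ℝ≥0∞) (hf : Measurable f) (g : 𝕋 × 𝕋 → ℝ≥0∞)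
    (hg : Measurable g) (P : 𝕋 → ℝ≥0∞) (hP : Measurable P) (s t : Finset String)
    (h : Disjoint s t) :
    ∫⁻ x : (↑s → V), f ⟨s, x⟩ * ∫⁻ y : (↑t → V), g (⟨s, x⟩, ⟨t, y⟩) * P (tcat ⟨s, x⟩ ⟨t, y⟩)
        ∂(Measure.pi fun _ => ν) ∂(Measure.pi fun _ => ν)
      = ∫⁻ z : (↑(s ∪ t) → V), summand f g P ⟨s ∪ t, z⟩ s Finset.subset_union_left
          ∂(Measure.pi fun _ => ν) := by
  have := sigmaFinite_nu
  have hg' : Measurable (fun p : (↑s → V) × (↑t → V) => g (⟨s, p.1⟩, ⟨t, p.2⟩)) :=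
    hg.comp (((measurable_tmk s).comp measurable_fst).prodMk
      ((measurable_tmk t).comp measurable_snd))
  have hf' : Measurable (fun p : (↑s → V) × (↑t → V) => f ⟨s, p.1⟩) :=
    hf.comp ((measurable_tmk s).comp measurable_fst)
  have hP' : Measurable (fun p : (↑s → V) × (↑t → V) => P (tcat ⟨s, p.1⟩ ⟨t, p.2⟩)) :=
    hP.comp (measurable_tcat s t)
  rw [(measurePreserving_piFinsetUnion h (fun _ : String => ν)).lintegral_map_equiv]
  have e : ∀ p : (↑s → V) × (↑t → V),
      summand f g P ⟨s ∪ t, MeasurableEquiv.piFinsetUnion (fun _ : String => V) h p⟩ s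
        Finset.subset_union_left
      = f ⟨s, p.1⟩ * (g (⟨s, p.1⟩, ⟨t, p.2⟩) * P (tcat ⟨s, p.1⟩ ⟨t, p.2⟩)) := by
    intro p
    have e1 : ∀ (u : 𝕋) (hu : s ⊆ u.1), u = tcat ⟨s, p.1⟩ ⟨t, p.2⟩ →
        summand f g P u s hu
          = f ⟨s, p.1⟩ * (g (⟨s, p.1⟩, ⟨t, p.2⟩) * P (tcat ⟨s, p.1⟩ ⟨t, p.2⟩)) := by
      rintro u hu rfl
      unfold summand
      rw [tres_tcat_left ⟨s, p.1⟩ ⟨t, p.2⟩ hu, tres_tcat_right ⟨s, p.1⟩ ⟨t, p.2⟩ h]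
      ring
    exact e1 _ _ (tcat_eq s t h p)
  simp_rw [e]
  rw [lintegral_prod _ (hf'.fun_mul (hg'.fun_mul hP')).aemeasurable]
  congr 1
  funext x
  refine (lintegral_const_mul _ ?_).symm
  exact (hg'.mul hP').comp measurable_prodMk_left

/-- reindexing map -/
def splitMap : (Σ s : Finset String, {t : Finset String // Disjoint s t}) →
    (Σ s : Finset String, {A : Finset String // A ∈ s.powerset}) := fun p =>
  ⟨p.1 ∪ p.2.1, ⟨p.1, Finset.mem_powerset.mpr Finset.subset_union_left⟩⟩

theorem splitMap_bij : Function.Bijective splitMap := by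
  have hinj : ∀ (q : Σ s : Finset String, {A : Finset String // A ∈ s.powerset})
      (p : Σ s : Finset String, {t : Finset String // Disjoint s t}), splitMap p = q →
      p.1 = q.2.1 ∧ p.2.1 = q.1 \ q.2.1 := by
    rintro q ⟨s, t, h⟩ rfl
    exact ⟨rfl, (Finset.union_sdiff_cancel_left h).symm⟩
  constructor
  · rintro ⟨s, t, h⟩ ⟨s', t', h'⟩ hpq
    obtain ⟨a, b⟩ := hinj _ _ hpq
    obtain ⟨a', b'⟩ := hinj _ ⟨s', t', h'⟩ rfl
    have hs : s = s' := a.trans a'.symm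
    have ht : t = t' := b.trans b'.symm
    subst hs
    subst ht
    rfl
  · rintro ⟨s, A, hA⟩
    have hA' := Finset.mem_powerset.mp hA
    refine ⟨⟨A, s \ A, Finset.disjoint_sdiff⟩, ?_⟩
    have : ∀ (s' : Finset String) (h' : A ∈ s'.powerset), s' = s →
        (⟨s', ⟨A, h'⟩⟩ : Σ s : Finset String, {A : Finset String // A ∈ s.powerset})
          = ⟨s, ⟨A, hA⟩⟩ := by
      rintro s' h' rfl
      rfl
    exact this _ _ (Finset.union_sdiff_of_subset hA')

theorem main_aux (f : 𝕋 → ℝ≥0∞) (hf : Measurable f) (g : 𝕋 × 𝕋 → ℝ≥0∞)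
    (hg : Measurable g) (P : 𝕋 → ℝ≥0∞) (hP : Measurable P)
    (κ : 𝕋 → Measure 𝕋) (hκ : ∀ u : 𝕋, κ u = B𝕋.withDensity (fun u' => g (u, u'))) :
    ∫⁻ u₁, ∫⁻ u₂, (if Disjoint u₁.1 u₂.1 then P (tcat u₁ u₂) else 0)
          ∂(κ u₁) ∂(B𝕋.withDensity f)
      = ∫⁻ u, P u * ∑ A ∈ u.1.powerset.attach,
        f (tres u A.1 (Finset.mem_powerset.mp A.2)) *
        g (tres u A.1 (Finset.mem_powerset.mp A.2),
           tres u (u.1 \ A.1) (Finset.sdiff_subset)) ∂B𝕋 := by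
  have := sigmaFinite_nu
  have := countable_string_aux
  have hgs : ∀ s t : Finset String,
      Measurable (fun p : (↑s → V) × (↑t → V) => g (⟨s, p.1⟩, ⟨t, p.2⟩)) := fun s t =>
    hg.comp (((measurable_tmk s).comp measurable_fst).prodMk
      ((measurable_tmk t).comp measurable_snd))
  have hj : ∀ s t : Finset String, Measurable (fun p : (↑s → V) × (↑t → V) =>
      g (⟨s, p.1⟩, ⟨t, p.2⟩) *
        (if Disjoint s t then P (tcat ⟨s, p.1⟩ ⟨t, p.2⟩) else 0)) := by
    intro s t
    refine (hgs s t).mul ?_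
    by_cases h : Disjoint s t
    · simp only [h, if_true]
      exact hP.comp (measurable_tcat s t)
    · simp only [h, if_false]
      exact measurable_const
  have hin : ∀ (s : Finset String) (x : ↑s → V),
      ∫⁻ u₂, (if Disjoint s u₂.1 then P (tcat ⟨s, x⟩ u₂) else 0) ∂(κ ⟨s, x⟩)
      = ∑' t : Finset String, ∫⁻ y : (↑t → V), g (⟨s, x⟩, ⟨t, y⟩) *
        (if Disjoint s t then P (tcat ⟨s, x⟩ ⟨t, y⟩) else 0) ∂(Measure.pi fun _ => ν) := by
    intro s x
    have hgm : Measurable (fun u' => g (⟨s, x⟩, u')) := hg.comp measurable_prodMk_left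
    have hm : Measurable (fun u₂ : 𝕋 => if Disjoint s u₂.1 then P (tcat ⟨s, x⟩ u₂) else 0) := by
      refine measurable_of_comp _ fun t => ?_
      by_cases h : Disjoint s t
      · simp only [h, if_true]
        exact (hP.comp (measurable_tcat s t)).comp measurable_prodMk_left
      · simp only [h, if_false]
        exact measurable_const
    rw [hκ, lintegral_withDensity_eq_lintegral_mul _ hgm hm, lintegral_B _ (hgm.mul hm)]
    rfl
  have hin' : ∀ s t : Finset String, Measurable (fun x : ↑s → V =>
      ∫⁻ y : (↑t → V), g (⟨s, x⟩, ⟨t, y⟩) *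
        (if Disjoint s t then P (tcat ⟨s, x⟩ ⟨t, y⟩) else 0) ∂(Measure.pi fun _ => ν)) :=
    fun s t => (hj s t).lintegral_prod_right'
  have hout : Measurable (fun u₁ : 𝕋 =>
      ∫⁻ u₂, (if Disjoint u₁.1 u₂.1 then P (tcat u₁ u₂) else 0) ∂(κ u₁)) := by
    refine measurable_of_comp _ fun s => ?_
    simp_rw [hin]
    exact Measurable.tsum (hin' s)
  rw [lintegral_withDensity_eq_lintegral_mul _ hf hout, lintegral_B _ (hf.mul hout)]
  have hL : ∀ s : Finset String, ∫⁻ x : (↑s → V), (f * fun u₁ : 𝕋 =>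
      ∫⁻ u₂, (if Disjoint u₁.1 u₂.1 then P (tcat u₁ u₂) else 0) ∂(κ u₁)) ⟨s, x⟩
        ∂(Measure.pi fun _ => ν)
      = ∑' t : {t : Finset String // Disjoint s t},
        ∫⁻ z : (↑(s ∪ t.1) → V), summand f g P ⟨s ∪ t.1, z⟩ s Finset.subset_union_left
          ∂(Measure.pi fun _ => ν) := by
    intro s
    refine (lintegral_congr fun x : (↑s → V) =>
      (congrArg (fun r => f ⟨s, x⟩ * r) (hin s x)).trans ENNReal.tsum_mul_left.symm).trans ?_
    have hfs : Measurable (fun x : (↑s → V) => f ⟨s, x⟩) := hf.comp (measurable_tmk s)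
    rw [lintegral_tsum fun t => (hfs.fun_mul (hin' s t)).aemeasurable]
    rw [← tsum_subtype_eq_of_support_subset (s := {t : Finset String | Disjoint s t})]
    · refine tsum_congr fun t => ?_
      rw [← key f hf g hg P hP s t.1 t.2]
      have ht : Disjoint s t.1 := t.2
      simp only [ht, if_true]
    · intro t ht
      by_contra hd
      apply ht
      have hd' : ¬ Disjoint s t := hd
      simp [hd']
  rw [tsum_congr hL]
  have hR : ∀ u : 𝕋, (P u * ∑ A ∈ u.1.powerset.attach,
        f (tres u A.1 (Finset.mem_powerset.mp A.2)) *
        g (tres u A.1 (Finset.mem_powerset.mp A.2),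
           tres u (u.1 \ A.1) (Finset.sdiff_subset)))
      = ∑ A ∈ u.1.powerset.attach, summand f g P u A.1 (Finset.mem_powerset.mp A.2) := by
    intro u
    rw [Finset.mul_sum]
    rfl
  rw [lintegral_congr hR]
  have hRm : Measurable (fun u : 𝕋 => ∑ A ∈ u.1.powerset.attach,
      summand f g P u A.1 (Finset.mem_powerset.mp A.2)) := by
    refine measurable_of_comp _ fun s => ?_
    have hA : ∀ A : {A : Finset String // A ∈ s.powerset}, A ∈ s.powerset.attach →
        Measurable (fun x : (↑s → V) =>
          summand f g P ⟨s, x⟩ A.1 (Finset.mem_powerset.mp A.2)) := fun A _ =>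
      measurable_summand f hf g hg P hP s A.1 (Finset.mem_powerset.mp A.2)
    have hS := Finset.measurable_fun_sum (f := fun (A : {A : Finset String // A ∈ s.powerset})
      (x : (↑s → V)) => summand f g P ⟨s, x⟩ A.1 (Finset.mem_powerset.mp A.2))
      s.powerset.attach hA
    exact hS
  rw [lintegral_B _ hRm]
  have hR2 : ∀ s : Finset String, ∫⁻ x : (↑s → V), ∑ A ∈ s.powerset.attach,
      summand f g P ⟨s, x⟩ A.1 (Finset.mem_powerset.mp A.2) ∂(Measure.pi fun _ => ν)
      = ∑' A : {A : Finset String // A ∈ s.powerset}, ∫⁻ x : (↑s → V),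
        summand f g P ⟨s, x⟩ A.1 (Finset.mem_powerset.mp A.2) ∂(Measure.pi fun _ => ν) := by
    intro s
    rw [lintegral_finsetSum _ fun A _ =>
      measurable_summand f hf g hg P hP s A.1 (Finset.mem_powerset.mp A.2)]
    rw [tsum_fintype]
    rfl
  rw [tsum_congr hR2]
  rw [← ENNReal.tsum_sigma' (fun p : (Σ s : Finset String, {t : Finset String // Disjoint s t}) =>
      ∫⁻ z : (↑(p.1 ∪ p.2.1) → V), summand f g P ⟨p.1 ∪ p.2.1, z⟩ p.1 Finset.subset_union_left
          ∂(Measure.pi fun _ => ν)),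
    ← ENNReal.tsum_sigma' (fun p : (Σ s : Finset String, {A : Finset String // A ∈ s.powerset}) =>
      ∫⁻ x : (↑p.1 → V),
        summand f g P ⟨p.1, x⟩ p.2.1 (Finset.mem_powerset.mp p.2.2) ∂(Measure.pi fun _ => ν))]
  exact (Equiv.ofBijective splitMap splitMap_bij).tsum_eq (fun p =>
      ∫⁻ x : (↑p.1 → V),
        summand f g P ⟨p.1, x⟩ p.2.1 (Finset.mem_powerset.mp p.2.2) ∂(Measure.pi fun _ => ν))

/-- Sequencing a trace measure `μ = B𝕋.withDensity f` with a Markov kernel `κ` whose values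
have densities `g u` w.r.t. `B𝕋` produces a measure that is absolutely continuous w.r.t.
`B𝕋`, with density at a trace `u` of shape `s` given by the finite sum over subsets `A ⊆ s`
of `f(u↾A) * g(u↾A, u↾(s \ A))`. -/
theorem seq_absolutelyContinuous
    (μ : Measure 𝕋) [IsFiniteMeasure μ] (f : 𝕋 → ℝ≥0∞) (hf : Measurable f)
    (hμ : μ = B𝕋.withDensity f)
    (κ : ProbabilityTheory.Kernel 𝕋 𝕋) [ProbabilityTheory.IsMarkovKernel κ]
    (g : 𝕋 × 𝕋 → ℝ≥0∞) (hg : Measurable g)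
    (hκ : ∀ u : 𝕋, κ u = B𝕋.withDensity (fun u' => g (u, u')))
    (β : Measure 𝕋)
    (hβ : ∀ A : Set 𝕋, MeasurableSet A →
      β A = ∫⁻ u₁, ∫⁻ u₂,
        (if Disjoint u₁.1 u₂.1 then A.indicator (fun _ => (1 : ℝ≥0∞)) (tcat u₁ u₂) else 0)
          ∂(κ u₁) ∂μ) :
    β ≪ B𝕋 ∧
    β = B𝕋.withDensity (fun u =>
      ∑ A ∈ u.1.powerset.attach,
        f (tres u A.1 (Finset.mem_powerset.mp A.2)) *
        g (tres u A.1 (Finset.mem_powerset.mp A.2),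
           tres u (u.1 \ A.1) (Finset.sdiff_subset))) := by
  have hE : β = B𝕋.withDensity (fun u =>
      ∑ A ∈ u.1.powerset.attach,
        f (tres u A.1 (Finset.mem_powerset.mp A.2)) *
        g (tres u A.1 (Finset.mem_powerset.mp A.2),
           tres u (u.1 \ A.1) (Finset.sdiff_subset))) := by
    ext A hA
    rw [hβ A hA, withDensity_apply _ hA, hμ,
      main_aux f hf g hg (A.indicator fun _ => 1) (measurable_const.indicator hA) κ hκ,
      ← lintegral_indicator hA]
    congr 1
    funext u
    by_cases hu : u ∈ A <;> simp [hu]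
  exact ⟨hE ▸ withDensity_absolutelyContinuous _ _, hE⟩
end

section
/- The Gaussian reparameterization gradient estimator (normal_REPARAM) is unbiased: let m, s : ℝ → ℝ be differentiable with s θ > 0 for all θ, and let f : ℝ → ℝ be differentiable with derivative f'. Assume (i) for every θ, the function ε ↦ f (m θ + s θ · ε) is integrable with respect to the standard Gaussian measure γ = N(0,1) on ℝ; and (ii) the function (θ, ε) ↦ f'(m θ + s θ · ε) · (m'(θ) + s'(θ) · ε) is locally dominated with respect to γ. Then for every θ, ∫ f d(N(m θ, (s θ)²)) = ∫ f (m θ + s θ · ε) dγ(ε), the map L(θ) := ∫ f d(N(m θ, (s θ)²)) is differentiable at θ, and L'(θ) = ∫ f'(m θ + s θ · ε) · (m'(θ) + s'(θ) · ε) dγ(ε), where N(a, v) denotes the Gaussian measure on ℝ with mean a and variance v. -/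
open MeasureTheory ProbabilityTheory
open scoped NNReal

/-- Local domination of a two-argument function with respect to a measure on `ℝ`. -/
def LocallyDominated (γ : Measure ℝ) (h : ℝ → ℝ → ℝ) : Prop :=
  ∀ θ : ℝ, ∃ U ∈ nhds θ, ∃ m : ℝ → ℝ, Integrable m γ ∧ (∀ ε, 0 ≤ m ε) ∧
    ∀ θ' ∈ U, ∀ ε, |h θ' ε| ≤ m ε

/-- The Gaussian reparameterization gradient estimator (`normal_REPARAM`) is unbiased:
for differentiable mean and (positive) standard deviation functions `m, s : ℝ → ℝ` and a
differentiable `f : ℝ → ℝ` such that `ε ↦ f (m θ + s θ * ε)` is integrable against the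
standard Gaussian `γ = N(0,1)` and the reparameterized derivative is locally dominated,
the loss `L θ = ∫ f dN(m θ, (s θ)²)` satisfies
`L θ = ∫ f (m θ + s θ * ε) dγ(ε)`, is differentiable, and
`L' θ = ∫ f' (m θ + s θ * ε) * (m' θ + s' θ * ε) dγ(ε)`. -/
theorem gaussian_reparam_unbiased
    (m s : ℝ → ℝ) (hm : Differentiable ℝ m) (hs : Differentiable ℝ s)
    (hspos : ∀ θ : ℝ, 0 < s θ)
    (f : ℝ → ℝ) (hf : Differentiable ℝ f)
    (hInt : ∀ θ : ℝ, Integrable (fun ε => f (m θ + s θ * ε)) (gaussianReal 0 1))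
    (hDom : LocallyDominated (gaussianReal 0 1)
      (fun θ ε => deriv f (m θ + s θ * ε) * (deriv m θ + deriv s θ * ε))) :
    ∀ θ : ℝ,
      ∫ x, f x ∂(gaussianReal (m θ) (Real.toNNReal ((s θ) ^ 2))) =
        ∫ ε, f (m θ + s θ * ε) ∂(gaussianReal 0 1) ∧
      HasDerivAt (fun θ' => ∫ x, f x ∂(gaussianReal (m θ') (Real.toNNReal ((s θ') ^ 2))))
        (∫ ε, deriv f (m θ + s θ * ε) * (deriv m θ + deriv s θ * ε) ∂(gaussianReal 0 1)) θ := by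
  have key : ∀ θ : ℝ, ∫ x, f x ∂(gaussianReal (m θ) (Real.toNNReal ((s θ) ^ 2))) =
        ∫ ε, f (m θ + s θ * ε) ∂(gaussianReal 0 1) := by
    intro θ
    have h : (gaussianReal 0 1).map (fun ε => m θ + s θ * ε) =
        gaussianReal (m θ) (Real.toNNReal ((s θ) ^ 2)) := by
      have h1 : (fun ε => m θ + s θ * ε) = (fun x => m θ + x) ∘ (fun ε => s θ * ε) := rfl
      rw [h1, ← Measure.map_map (by fun_prop) (by fun_prop), gaussianReal_map_const_mul,
        gaussianReal_map_const_add]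
      congr 1
      · simp
      · ext
        simp [Real.coe_toNNReal _ (sq_nonneg (s θ))]
    rw [← h, integral_map (by fun_prop) hf.continuous.aestronglyMeasurable]
  intro θ
  refine ⟨key θ, ?_⟩
  simp_rw [key]
  obtain ⟨U, hU, b, hb, -, hbd⟩ := hDom θ
  refine (hasDerivAt_integral_of_dominated_loc_of_deriv_le (μ := gaussianReal 0 1)
    (F := fun θ ε => f (m θ + s θ * ε))
    (F' := fun θ ε => deriv f (m θ + s θ * ε) * (deriv m θ + deriv s θ * ε))
    (bound := b) hU (Filter.Eventually.of_forall fun x => (hInt x).aestronglyMeasurable)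
    (hInt θ) ?_ (Filter.Eventually.of_forall fun ε x hx => hbd x hx ε) hb
    (Filter.Eventually.of_forall fun ε x _ => ?_)).2
  · apply Measurable.aestronglyMeasurable
    exact ((measurable_deriv f).comp (by fun_prop)).mul (by fun_prop)
  · exact (hf _).hasDerivAt.comp x
      ((hm x).hasDerivAt.add ((hs x).hasDerivAt.mul_const ε))
end
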